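/- Let K ⊆ F₁, F₂ be field extensions, A, B two K-algebras of the same dimension ω with |K| > ω, and suppose the algebraic closure of K embeds in F₂. If A ⊗_K F₁ ≅ B ⊗_K F₁ as F₁-algebras, then A ⊗_K F₂ ≅ B ⊗_K F₂ as F₂-algebras. -/

import Mathlib

open TensorProduct

universe u

/-- The Zariski lemma together with its large-cardinality variant, for a field quotient. -/
theorem exists_algHom_of_small_aux {K F L : Type u} [Field K] [Field F] [Algebra K F] (S : Set F)
    [Field L] [Algebra K L] (q : Algebra.adjoin K S →ₐ[K] L) (hq : Function.Surjective q)
    (hS : S.Finite ∨ (Cardinal.mk S < Cardinal.mk K ∧ Cardinal.aleph0 < Cardinal.mk K)) :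
    Nonempty (Algebra.adjoin K S →ₐ[K] AlgebraicClosure K) := by
  have halg : Algebra.IsAlgebraic K L := by
    rcases hS with hS | ⟨h1, h2⟩
    · have : Algebra.FiniteType K (Algebra.adjoin K S) :=
        (Subalgebra.fg_iff_finiteType _).1 (Subalgebra.fg_def.2 ⟨S, hS, rfl⟩)
      have : Algebra.FiniteType K L := Algebra.FiniteType.of_surjective q hq
      have := finite_of_finite_type_of_isJacobsonRing K L
      infer_instance
    · rw [Algebra.isAlgebraic_def]
      intro x
      by_contra hx
      have hx' : Transcendental K x := hx
      have h3 := hx'.linearIndependent_sub_inv.cardinal_le_rank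
      have h4 : Module.rank K L ≤ Module.rank K (Algebra.adjoin K S) :=
        LinearMap.rank_le_of_surjective q.toLinearMap hq
      have h5 := Algebra.rank_adjoin_le (R := K) S
      exact absurd (h3.trans (h4.trans h5)) (not_le.2 (max_lt h1 h2))
  exact ⟨(IsAlgClosed.lift (R := K) (M := AlgebraicClosure K) (S := L)).comp q⟩

/-- The Zariski lemma together with its large-cardinality variant. -/
theorem exists_algHom_of_small {K F : Type u} [Field K] [Field F] [Algebra K F] (S : Set F)
    (hS : S.Finite ∨ (Cardinal.mk S < Cardinal.mk K ∧ Cardinal.aleph0 < Cardinal.mk K)) :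
    Nonempty (Algebra.adjoin K S →ₐ[K] AlgebraicClosure K) := by
  obtain ⟨m, hm⟩ := Ideal.exists_maximal (Algebra.adjoin K S)
  let _ := Ideal.Quotient.field m
  exact exists_algHom_of_small_aux S (Ideal.Quotient.mkₐ K m)
    (Ideal.Quotient.mkₐ_surjective K m) hS

set_option linter.unusedSectionVars false

section

variable {K R F A B : Type u} [Field K] [CommRing R] [Algebra K R] [CommRing F] [Algebra K F]
    [NonUnitalNonAssocRing A] [Module K A] [SMulCommClass K A A] [IsScalarTower K A A]
    [NonUnitalNonAssocRing B] [Module K B] [SMulCommClass K B B] [IsScalarTower K B B]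

theorem rTensor_smul' (φ : R →ₐ[K] F) (r : R) (x : R ⊗[K] A) :
    φ.toLinearMap.rTensor A (r • x) = φ r • φ.toLinearMap.rTensor A x := by
  induction x with
  | zero => simp
  | add x y hx hy => simp only [smul_add, map_add, hx, hy]
  | tmul s a => simp [TensorProduct.smul_tmul']

theorem rTensor_mul' (φ : R →ₐ[K] F) (x y : R ⊗[K] A) :
    φ.toLinearMap.rTensor A (x * y) =
      φ.toLinearMap.rTensor A x * φ.toLinearMap.rTensor A y := by
  induction x with
  | zero => simp
  | add x y hx hy => simp only [add_mul, map_add, hx, hy]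
  | tmul s a =>
    induction y with
    | zero => simp
    | add x y hx hy => simp only [mul_add, map_add, hx, hy]
    | tmul t b => simp [Algebra.TensorProduct.tmul_mul_tmul]

theorem rTensor_lift' (φ : R →ₐ[K] F) (f : A →ₗ[K] R ⊗[K] B) (x : R ⊗[K] A) :
    φ.toLinearMap.rTensor B (f.liftBaseChange R x) =
      ((φ.toLinearMap.rTensor B).comp f).liftBaseChange F (φ.toLinearMap.rTensor A x) := by
  induction x with
  | zero => simp
  | add x y hx hy => simp only [map_add, hx, hy]
  | tmul s a =>
    simp [rTensor_smul']

theorem lift_mul' (f : A →ₗ[K] F ⊗[K] B) (hf : ∀ a a', f (a * a') = f a * f a')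
    (x y : F ⊗[K] A) :
    f.liftBaseChange F (x * y) = f.liftBaseChange F x * f.liftBaseChange F y := by
  induction x with
  | zero => simp
  | add x y hx hy => simp only [add_mul, map_add, hx, hy]
  | tmul s a =>
    induction y with
    | zero => simp
    | add x y hx hy => simp only [mul_add, map_add, hx, hy]
    | tmul t b =>
      simp [Algebra.TensorProduct.tmul_mul_tmul, hf, smul_mul_assoc, mul_smul_comm, mul_smul]
      exact smul_comm _ _ _

theorem lift_lift' (f : A →ₗ[K] F ⊗[K] B) (g : B →ₗ[K] F ⊗[K] A)
    (h : ∀ a, g.liftBaseChange F (f a) = 1 ⊗ₜ a) (x : F ⊗[K] A) :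
    g.liftBaseChange F (f.liftBaseChange F x) = x := by
  induction x with
  | zero => simp
  | add x y hx hy => simp only [map_add, hx, hy]
  | tmul s a =>
    rw [LinearMap.liftBaseChange_tmul, map_smul, h, TensorProduct.smul_tmul']
    simp

/-- Descent of a linear map to a subalgebra containing the coefficients. -/
theorem exists_descent {F₁ : Type u} [Field F₁] [Algebra K F₁] (S : Subalgebra K F₁)
    {ι : Type u} (b : Module.Basis ι K A) (f : A →ₗ[K] F₁ ⊗[K] B)
    (h : ∀ i, f (b i) ∈ LinearMap.range (S.val.toLinearMap.rTensor B)) :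
    ∃ f₀ : A →ₗ[K] S ⊗[K] B, (S.val.toLinearMap.rTensor B).comp f₀ = f := by
  choose p hp using h
  refine ⟨b.constr K p, b.ext fun i => ?_⟩
  simp [hp]

theorem exists_finite_coeff {F₁ : Type u} [Field F₁] [Algebra K F₁] (x : F₁ ⊗[K] B) :
    ∃ T : Finset F₁, ∀ S : Subalgebra K F₁, (T : Set F₁) ⊆ S →
      x ∈ LinearMap.range (S.val.toLinearMap.rTensor B) := by
  classical
  induction x with
  | zero => exact ⟨∅, fun S _ => zero_mem _⟩
  | add x y hx hy =>
    obtain ⟨T, hT⟩ := hx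
    obtain ⟨U, hU⟩ := hy
    refine ⟨T ∪ U, fun S hS => ?_⟩
    rw [Finset.coe_union, Set.union_subset_iff] at hS
    exact add_mem (hT S hS.1) (hU S hS.2)
  | tmul s a =>
    refine ⟨{s}, fun S hS => ⟨(⟨s, hS (by simp)⟩ : S) ⊗ₜ a, by simp⟩⟩

theorem rTensor_inj {F₁ : Type u} [Field F₁] [Algebra K F₁] (S : Subalgebra K F₁) :
    Function.Injective (S.val.toLinearMap.rTensor B) :=
  Module.Flat.rTensor_preserves_injective_linearMap _ Subtype.val_injective

end

theorem stmt18 (K F₁ F₂ : Type u) [Field K]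
    [Field F₁] [Algebra K F₁] [Field F₂] [Algebra K F₂]
    (A B : Type u)
    [NonUnitalNonAssocRing A] [Module K A] [SMulCommClass K A A] [IsScalarTower K A A]
    [NonUnitalNonAssocRing B] [Module K B] [SMulCommClass K B B] [IsScalarTower K B B]
    (ω : Cardinal.{u}) (hA : Module.rank K A = ω) (hB : Module.rank K B = ω)
    (hK : ω < Cardinal.mk K)
    (hclos : Nonempty (AlgebraicClosure K →ₐ[K] F₂))
    (h : ∃ e : (F₁ ⊗[K] A) ≃ₗ[F₁] (F₁ ⊗[K] B), ∀ x y, e (x * y) = e x * e y) :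
    ∃ e : (F₂ ⊗[K] A) ≃ₗ[F₂] (F₂ ⊗[K] B), ∀ x y, e (x * y) = e x * e y := by
  obtain ⟨e, he⟩ := h
  obtain ⟨j⟩ := hclos
  let bA := Module.Free.chooseBasis K A
  let bB := Module.Free.chooseBasis K B
  let I := Module.Free.ChooseBasisIndex K A
  let J := Module.Free.ChooseBasisIndex K B
  have hI : Cardinal.mk I = ω := by rw [← hA, Module.Free.rank_eq_card_chooseBasisIndex]
  have hJ : Cardinal.mk J = ω := by rw [← hB, Module.Free.rank_eq_card_chooseBasisIndex]
  let f : A →ₗ[K] F₁ ⊗[K] B := (e.toLinearMap.restrictScalars K).comp (TensorProduct.mk K F₁ A 1)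
  let g : B →ₗ[K] F₁ ⊗[K] A :=
    (e.symm.toLinearMap.restrictScalars K).comp (TensorProduct.mk K F₁ B 1)
  have hfe : ∀ x, f.liftBaseChange F₁ x = e x := by
    intro x
    have : f.liftBaseChange F₁ = e.toLinearMap := by ext; simp [f]
    rw [this]; rfl
  have hge : ∀ x, g.liftBaseChange F₁ x = e.symm x := by
    intro x
    have : g.liftBaseChange F₁ = e.symm.toLinearMap := by ext; simp [g]
    rw [this]; rfl
  choose T hT using fun i : I => exists_finite_coeff (f (bA i))
  choose U hU using fun i : J => exists_finite_coeff (g (bB i))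
  let V : I ⊕ J → Finset F₁ := Sum.elim T U
  let S : Set F₁ := ⋃ i, (V i : Set F₁)
  have hS : S.Finite ∨ (Cardinal.mk S < Cardinal.mk K ∧ Cardinal.aleph0 < Cardinal.mk K) := by
    rcases lt_or_ge ω Cardinal.aleph0 with hω | hω
    · left
      have : Finite I := Cardinal.lt_aleph0_iff_finite.1 (hI ▸ hω)
      have : Finite J := Cardinal.lt_aleph0_iff_finite.1 (hJ ▸ hω)
      exact Set.finite_iUnion fun i => Finset.finite_toSet _
    · right
      refine ⟨lt_of_le_of_lt ?_ hK, hω.trans_lt hK⟩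
      refine (Cardinal.mk_iUnion_le _).trans ?_
      have h1 : Cardinal.mk (I ⊕ J) = ω := by
        rw [Cardinal.mk_sum, hI, hJ, Cardinal.lift_id, Cardinal.add_eq_self hω]
      rw [h1]
      refine (mul_le_mul_right (ciSup_le' (a := Cardinal.aleph0) fun i => ?_) ω).trans ?_
      · exact (Cardinal.lt_aleph0_of_finite _).le
      · rw [Cardinal.mul_aleph0_eq hω]
  obtain ⟨ψ⟩ := exists_algHom_of_small S hS
  let R := Algebra.adjoin K S
  let φ : R →ₐ[K] F₂ := j.comp ψ
  have hV : ∀ i, (V i : Set F₁) ⊆ R := fun i =>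
    (Set.subset_iUnion (fun i => (V i : Set F₁)) i).trans Algebra.subset_adjoin
  obtain ⟨f₀, hf₀⟩ := exists_descent R bA f (fun i => hT i R (hV (Sum.inl i)))
  obtain ⟨g₀, hg₀⟩ := exists_descent R bB g (fun i => hU i R (hV (Sum.inr i)))
  have hf₀' : ∀ a, R.val.toLinearMap.rTensor B (f₀ a) = f a := fun a => by rw [← hf₀]; rfl
  have hg₀' : ∀ a, R.val.toLinearMap.rTensor A (g₀ a) = g a := fun a => by rw [← hg₀]; rfl
  have hmul : ∀ a a', f₀ (a * a') = f₀ a * f₀ a' := by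
    intro a a'
    apply rTensor_inj R
    rw [rTensor_mul', hf₀', hf₀', hf₀']
    simp [f, ← he, Algebra.TensorProduct.tmul_mul_tmul]
  have hgf : ∀ a, g₀.liftBaseChange R (f₀ a) = 1 ⊗ₜ a := by
    intro a
    apply rTensor_inj R
    rw [rTensor_lift', hf₀', hg₀, hge]
    simp [f]
  have hfg : ∀ b, f₀.liftBaseChange R (g₀ b) = 1 ⊗ₜ b := by
    intro b
    apply rTensor_inj R
    rw [rTensor_lift', hg₀', hf₀, hfe]
    simp [g]
  let f₂ : A →ₗ[K] F₂ ⊗[K] B := (φ.toLinearMap.rTensor B).comp f₀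
  let g₂ : B →ₗ[K] F₂ ⊗[K] A := (φ.toLinearMap.rTensor A).comp g₀
  have h1 : ∀ a, g₂.liftBaseChange F₂ (f₂ a) = 1 ⊗ₜ a := by
    intro a
    have := rTensor_lift' φ g₀ (f₀ a)
    rw [hgf] at this
    refine this.symm.trans ?_
    simp
  have h2 : ∀ b, f₂.liftBaseChange F₂ (g₂ b) = 1 ⊗ₜ b := by
    intro b
    have := rTensor_lift' φ f₀ (g₀ b)
    rw [hfg] at this
    refine this.symm.trans ?_
    simp
  refine ⟨LinearEquiv.ofLinearMap (f₂.liftBaseChange F₂) (g₂.liftBaseChange F₂)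
    (LinearMap.ext fun x => lift_lift' g₂ f₂ h2 x)
    (LinearMap.ext fun x => lift_lift' f₂ g₂ h1 x), fun x y => ?_⟩
  refine lift_mul' f₂ (fun a a' => ?_) x y
  simp only [f₂, LinearMap.comp_apply, hmul, rTensor_mul']
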